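/- Let G be a connected labeled semi-Hamiltonian graph on vertex set [n] (i.e., L_n ⊆ G and {1,n} ∉ E(G)). Then the Hankel edge ideal I_G is a radical ideal if and only if G = K_n − e where e = {1,n}. -/

import Mathlib

open MvPolynomial

/-- The Hankel binomial `g_{ij} = x_i x_{j+1} - x_j x_{i+1}` (0-indexed vertices). -/
noncomputable def hg (n : ℕ) (K : Type*) [Field K] (i j : Fin n) :
    MvPolynomial (Fin (n + 1)) K :=
  X i.castSucc * X j.succ - X j.castSucc * X i.succ

/-- The generating set of the Hankel edge ideal of a graph `G` on `[n]`. -/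
noncomputable def hgenSet (n : ℕ) (K : Type*) [Field K] (G : SimpleGraph (Fin n)) :
    Set (MvPolynomial (Fin (n + 1)) K) :=
  { f | ∃ i j : Fin n, i < j ∧ G.Adj i j ∧ f = hg n K i j }

/-- The Hankel edge ideal `I_G`. -/
noncomputable def hankelIdeal (n : ℕ) (K : Type*) [Field K] (G : SimpleGraph (Fin n)) :
    Ideal (MvPolynomial (Fin (n + 1)) K) :=
  Ideal.span (hgenSet n K G)

/-- `I_X`, the ideal of 2-minors of the 2×n Hankel matrix, i.e. `I_{K_n}`. -/
noncomputable def IX (n : ℕ) (K : Type*) [Field K] :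
    Ideal (MvPolynomial (Fin (n + 1)) K) :=
  hankelIdeal n K ⊤

/-- The height of an ideal: the infimum of the heights of primes containing it. -/
noncomputable def ht {R : Type*} [CommRing R] (I : Ideal R) : ℕ∞ :=
  ⨅ (p : PrimeSpectrum R) (_ : I ≤ p.asIdeal), Order.height p

/-- The minimal number of generators of an ideal. -/
noncomputable def mu {R : Type*} [CommRing R] (I : Ideal R) : ℕ∞ :=
  ⨅ (s : Finset R) (_ : Ideal.span (s : Set R) = I), (s.card : ℕ∞)

/-- The arithmetical rank of an ideal. -/
noncomputable def ara {R : Type*} [CommRing R] (I : Ideal R) : ℕ∞ :=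
  ⨅ (s : Finset R) (_ : (Ideal.span (s : Set R)).radical = I.radical), (s.card : ℕ∞)

/-- The labeled path `L_n` with edges `{i, i+1}` (0-indexed). -/
def pathG (n : ℕ) : SimpleGraph (Fin n) :=
  SimpleGraph.fromRel (fun i j => (i : ℕ) + 1 = (j : ℕ))

/-- The labeled cycle `C_n` with edges `{i, i+1}` and `{0, n-1}` (0-indexed). -/
def cycleG (n : ℕ) : SimpleGraph (Fin n) :=
  SimpleGraph.fromRel (fun i j =>
    (i : ℕ) + 1 = (j : ℕ) ∨ ((i : ℕ) = 0 ∧ (j : ℕ) = n - 1))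

/-- The monomial prime ideal generated by the variables with index in `[lo, hi]` (0-indexed). -/
noncomputable def Pvars (n : ℕ) (K : Type*) [Field K] (lo hi : ℕ) :
    Ideal (MvPolynomial (Fin (n + 1)) K) :=
  Ideal.span { f | ∃ i : Fin (n + 1), lo ≤ (i : ℕ) ∧ (i : ℕ) ≤ hi ∧ f = X i }

/-- The complete graph on `[n]` minus the edge `{1, n}` (0-indexed: `{0, n-1}`). -/
def KnMinusE (n : ℕ) : SimpleGraph (Fin n) :=
  (⊤ : SimpleGraph (Fin n)) \
    SimpleGraph.fromRel (fun i j => (i : ℕ) = 0 ∧ (j : ℕ) = n - 1)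

/-!
Write `J = I_{K_n - e}` and `P = (x_1, …, x_{n-1})` (0-indexed).

If `I_G` is radical, then it contains `J`: modulo a prime containing `I_{L_n}` the residues satisfy
`z_i z_{i+2} = z_{i+1}^2`, so either all of `z_1, …, z_{n-1}` vanish, or none does and the sequence
is geometric; in both cases every generator of `J` vanishes. The Hankel binomials are linearly
independent quadrics, so `J ≤ I_G` forces `K_n - e ≤ G`.

Conversely, `I_X` is the kernel of `x_k ↦ s t^k`, hence prime. For `n ≥ 3` we have
`I_X = J + (g)`, where `g` is the binomial of `e`. Since `P * g ⊆ J ≤ P` and `g ∉ P`, it follows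
that `J = I_X ⊓ P`, an intersection of two primes.
-/

section CommutativeAlgebra

variable {R σ τ : Type*} [CommRing R]

lemma sup_span_singleton_inf_eq_left {I P : Ideal R} [hP : P.IsPrime] {g : R} (hIP : I ≤ P)
    (hgP : g ∉ P) (hPg : ∀ p ∈ P, p * g ∈ I) : (I ⊔ Ideal.span {g}) ⊓ P = I := by
  refine le_antisymm ?_ (le_inf le_sup_left hIP)
  rintro f ⟨hf, hfP⟩
  obtain ⟨u, hu, v, hv, rfl⟩ := Submodule.mem_sup.mp hf
  obtain ⟨a, rfl⟩ := Ideal.mem_span_singleton'.mp hv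
  have hag : a * g ∈ P := (Submodule.add_mem_iff_right P (hIP hu)).mp hfP
  exact add_mem hu (hPg a ((hP.mem_or_mem hag).resolve_right hgP))

lemma span_X_image_eq_ker (s : Set σ) :
    Ideal.span (X '' s) =
      RingHom.ker (aeval (sᶜ.indicator X) : MvPolynomial σ R →ₐ[R] MvPolynomial σ R) := by
  set I : Ideal (MvPolynomial σ R) := Ideal.span (X '' s)
  set killVars : MvPolynomial σ R →ₐ[R] MvPolynomial σ R := aeval (sᶜ.indicator X)
  apply le_antisymm
  · rw [Ideal.span_le]
    rintro _ ⟨i, hi, rfl⟩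
    simp [killVars, RingHom.mem_ker, hi]
  · have mk_comp_killVars : (Ideal.Quotient.mkₐ R I).comp killVars = Ideal.Quotient.mkₐ R I := by
      ext i
      by_cases hi : i ∈ s
      · have hXi : X i ∈ I := Ideal.subset_span ⟨i, hi, rfl⟩
        simp [killVars, hi, Ideal.Quotient.eq_zero_iff_mem.mpr hXi]
      · simp [killVars, hi]
    intro f hf
    rw [← Ideal.Quotient.eq_zero_iff_mem, ← Ideal.Quotient.mkₐ_eq_mk R, ← mk_comp_killVars,
      AlgHom.comp_apply, show killVars f = 0 from hf, map_zero]

lemma isPrime_span_X_image [IsDomain R] (s : Set σ) :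
    (Ideal.span (X '' s) : Ideal (MvPolynomial σ R)).IsPrime := by
  rw [span_X_image_eq_ker]
  exact RingHom.ker_isPrime _

lemma X_mem_span_X_image_iff [Nontrivial R] {s : Set σ} {i : σ} :
    (X i : MvPolynomial σ R) ∈ Ideal.span (X '' s) ↔ i ∈ s := by
  classical
  simp [mem_ideal_span_X_image, support_X, Finsupp.single_apply]

lemma prod_map_pow_eq_pow_sum {ι M : Type*} [CommMonoid M] (s : Multiset ι) (f : ι → ℕ) (a : M) :
    (s.map fun i => a ^ f i).prod = a ^ (s.map f).sum := by
  induction s using Multiset.induction_on with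
  | empty => simp
  | cons i s ih => simp [ih, pow_add]

lemma aeval_monomial_one_eq_prod_toMultiset {A : Type*} [CommRing A] [Algebra R A] (x : σ → A)
    (m : σ →₀ ℕ) : aeval x (monomial m (1 : R)) = (m.toMultiset.map x).prod := by
  rw [aeval_monomial, map_one, one_mul, Finsupp.toMultiset_map, Finsupp.prod_toMultiset,
    Finsupp.prod_mapDomain_index (by simp) (by intros; exact pow_add _ _ _)]

lemma ker_le_ker_of_monomial {M : Type*} [AddCommGroup M] [Module R M]
    {φ : MvPolynomial σ R →ₗ[R] MvPolynomial τ R} {ψ : MvPolynomial σ R →ₗ[R] M}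
    (N : (τ →₀ ℕ) → M)
    (h : ∀ m, ∃ e, φ (monomial m 1) = monomial e 1 ∧ ψ (monomial m 1) = N e) :
    LinearMap.ker φ ≤ LinearMap.ker ψ := by
  have factor : ψ = (basisMonomials τ R).constr R N ∘ₗ φ := by
    refine (basisMonomials σ R).ext fun m => ?_
    obtain ⟨e, hφ, hψ⟩ := h m
    rw [coe_basisMonomials, LinearMap.comp_apply, hφ, hψ, ← congrFun (coe_basisMonomials τ R) e,
      Module.Basis.constr_basis]
  rw [factor]
  exact LinearMap.ker_le_ker_comp φ _

lemma homogeneousComponent_add_mul_of_isHomogeneous {d : ℕ} (i : ℕ) (f : MvPolynomial σ R)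
    {g : MvPolynomial σ R} (hgd : g.IsHomogeneous d) :
    homogeneousComponent (i + d) (f * g) = homogeneousComponent i f * g := by
  let _ := gradedAlgebra (σ := σ) (R := R)
  simp_rw [← decomposition.decompose'_apply]
  have h := DirectSum.coe_decompose_mul_of_right_mem_of_le (𝒜 := homogeneousSubmodule σ R)
    (a := f) hgd (Nat.le_add_left d i)
  rwa [Nat.add_sub_cancel] at h

lemma mem_span_of_mem_idealSpan_of_isHomogeneous {d : ℕ} {S : Set (MvPolynomial σ R)}
    (hS : ∀ g ∈ S, g.IsHomogeneous d) {f : MvPolynomial σ R} (hf : f.IsHomogeneous d)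
    (hfS : f ∈ Ideal.span S) : f ∈ Submodule.span R S := by
  suffices ∀ h, homogeneousComponent d (h * f) ∈ Submodule.span R S by
    simpa [homogeneousComponent_eq_self hf] using this 1
  clear hf
  induction hfS using Submodule.span_induction with
  | mem g hgS =>
    intro h
    rw [← Nat.zero_add d, homogeneousComponent_add_mul_of_isHomogeneous 0 h (hS g hgS),
      homogeneousComponent_zero, ← smul_eq_C_mul]
    exact Submodule.smul_mem _ _ (Submodule.subset_span hgS)
  | zero => simp
  | add p q _ _ hp hq =>
    intro h
    rw [mul_add, map_add]
    exact add_mem (hp h) (hq h)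
  | smul a p _ hp =>
    intro h
    rw [smul_eq_mul, ← mul_assoc]
    exact hp (h * a)

end CommutativeAlgebra

section Sequences

/-- The vanishing of the 2-minor on columns `i` and `j` of the Hankel matrix with rows
`y 0, y 1, …` and `y 1, y 2, …`. -/
def HankelRel {R : Type*} [Mul R] (y : ℕ → R) (i j : ℕ) : Prop :=
  y i * y (j + 1) = y j * y (i + 1)

variable {R : Type*} [CommRing R] {n : ℕ} {y : ℕ → R}

lemma mul_eq_mul_of_hankelRel (hy : ∀ i < n, ∀ j < n, HankelRel y i j) {i j t : ℕ}
    (hi : i + t ≤ n) (hj : j + t ≤ n) : y (i + t) * y j = y i * y (j + t) := by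
  induction t generalizing j with
  | zero => rfl
  | succ t ih =>
    calc y (i + t + 1) * y j = y (i + t) * y (j + 1) := by
          rw [mul_comm, hy j (by omega) (i + t) (by omega)]
      _ = y i * y (j + 1 + t) := ih (by omega) (by omega)
      _ = y i * y (j + (t + 1)) := by rw [Nat.add_right_comm, Nat.add_assoc]

/-- The normal form of a product of `d` terms among `y 0, …, y n` with index sum `w ≤ n * d`,
modulo the Hankel relations: at most one factor is neither `y 0` nor `y n`. -/
def hankelNormalForm (n : ℕ) (y : ℕ → R) : ℕ → ℕ → R
  | 0, _ => 1
  | d + 1, w => if w ≤ n then y w * y 0 ^ d else y n * hankelNormalForm n y d (w - n)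

lemma mul_hankelNormalForm (hy : ∀ i < n, ∀ j < n, HankelRel y i j) {d w k : ℕ} (hw : w ≤ n * d)
    (hk : k ≤ n) : y k * hankelNormalForm n y d w = hankelNormalForm n y (d + 1) (k + w) := by
  induction d generalizing w with
  | zero =>
    obtain rfl : w = 0 := by simpa using hw
    simp [hankelNormalForm, hk]
  | succ d ih =>
    rw [Nat.mul_succ] at hw
    by_cases hwn : w ≤ n
    · rw [hankelNormalForm, if_pos hwn, ← mul_assoc]
      by_cases hkw : k + w ≤ n
      · have hlow := mul_eq_mul_of_hankelRel hy (i := 0) (j := w) (t := k) (by omega) (by omega)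
        rw [zero_add, add_comm w] at hlow
        rw [hankelNormalForm, if_pos hkw, hlow]
        ring
      · have hhigh := mul_eq_mul_of_hankelRel hy (i := k) (j := k + w - n) (t := n - k)
          (by omega) (by omega)
        rw [show k + (n - k) = n by omega, show k + w - n + (n - k) = w by omega] at hhigh
        rw [hankelNormalForm, if_neg hkw, hankelNormalForm, if_pos (by omega), ← hhigh, mul_assoc]
    · rw [hankelNormalForm, if_neg hwn, hankelNormalForm, if_neg (by omega), mul_left_comm,
        ih (by omega), Nat.add_sub_assoc (by omega)]

lemma prod_map_eq_hankelNormalForm (hy : ∀ i < n, ∀ j < n, HankelRel y i j) (s : Multiset ℕ)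
    (hs : ∀ k ∈ s, k ≤ n) : (s.map y).prod = hankelNormalForm n y s.card s.sum := by
  induction s using Multiset.induction_on with
  | empty => simp [hankelNormalForm]
  | cons k s ih =>
    obtain ⟨hk, hs⟩ := Multiset.forall_mem_cons.mp hs
    have hsum : s.sum ≤ n * s.card := by
      simpa [mul_comm] using Multiset.sum_le_card_nsmul s n hs
    rw [Multiset.map_cons, Multiset.prod_cons, ih hs, mul_hankelNormalForm hy hsum hk,
      Multiset.card_cons, Multiset.sum_cons]

lemma mul_corner_eq_of_hankelRel (hn : 3 ≤ n)
    (hy : ∀ i j, i < j → j < n → ¬(i = 0 ∧ j = n - 1) → HankelRel y i j) {c : ℕ}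
    (hc0 : 0 < c) (hcn : c < n) : y c * (y 0 * y n) = y c * (y (n - 1) * y 1) := by
  obtain ⟨m, rfl⟩ : ∃ m, n = m + 1 := ⟨n - 1, by omega⟩
  rw [Nat.add_sub_cancel] at *
  rcases Nat.lt_succ_iff_lt_or_eq.mp hcn with hcm | rfl
  · have hcm' : y c * y (m + 1) = y m * y (c + 1) := hy c m hcm (by omega) (by omega)
    have h0c : y 0 * y (c + 1) = y c * y 1 := hy 0 c hc0 (by omega) (by omega)
    linear_combination y 0 * hcm' + y m * h0c
  · obtain ⟨b, rfl⟩ : ∃ b, c = b + 1 := ⟨c - 1, by omega⟩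
    have h0b : y 0 * y (b + 1) = y b * y 1 := hy 0 b (by omega) (by omega) (by omega)
    have hb : y b * y (b + 1 + 1) = y (b + 1) * y (b + 1) := hy b (b + 1) (by omega) (by omega)
      (by omega)
    linear_combination y (b + 1 + 1) * h0b + y 1 * hb

variable [IsDomain R]

lemma eq_zero_iff_of_hankelRel_succ (hy : ∀ i, i + 1 < n → HankelRel y i (i + 1)) {k : ℕ}
    (hk0 : 0 < k) (hkn : k < n) : y k = 0 ↔ y 1 = 0 := by
  induction k, hk0 using Nat.le_induction with
  | base => rfl
  | succ k hk ih =>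
    rw [← ih (by omega)]
    obtain ⟨l, rfl⟩ : ∃ l, k = l + 1 := ⟨k - 1, by omega⟩
    have hl : y l * y (l + 2) = y (l + 1) * y (l + 1) := hy l (by omega)
    have hl' : y (l + 1) * y (l + 3) = y (l + 2) * y (l + 2) := hy (l + 1) hkn
    constructor <;> intro hzero
    · simpa [hzero] using hl
    · simpa [hzero] using hl'

lemma HankelRel.of_succ (hy : ∀ i, i + 1 < n → HankelRel y i (i + 1)) {i j : ℕ} (hij : i < j)
    (hjn : j < n) (hcorner : ¬(i = 0 ∧ j = n - 1)) : HankelRel y i j := by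
  by_cases hy1 : y 1 = 0
  · have hmid : ∀ k, 0 < k → k < n → y k = 0 := fun k hk0 hkn =>
      (eq_zero_iff_of_hankelRel_succ hy hk0 hkn).mpr hy1
    rw [HankelRel, hmid j (by omega) hjn, zero_mul, mul_eq_zero]
    by_cases hi : i = 0
    · exact Or.inr (hmid _ (by omega) (by omega))
    · exact Or.inl (hmid i (by omega) (by omega))
  · induction j, hij using Nat.le_induction with
    | base => exact hy i hjn
    | succ j hij ih =>
      have hyj : y j ≠ 0 := (eq_zero_iff_of_hankelRel_succ hy (by omega) (by omega)).not.mpr hy1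
      have hrel : y i * y (j + 1) = y j * y (i + 1) := ih (by omega) (by omega)
      have hj : y j * y (j + 2) = y (j + 1) * y (j + 1) := hy j hjn
      apply mul_left_cancel₀ hyj
      linear_combination y i * hj + y (j + 1) * hrel

end Sequences

section Graphs

variable {n : ℕ}

lemma KnMinusE_adj_iff {i j : Fin n} :
    (KnMinusE n).Adj i j ↔ i ≠ j ∧ ¬((i : ℕ) = 0 ∧ (j : ℕ) = n - 1) ∧
      ¬((j : ℕ) = 0 ∧ (i : ℕ) = n - 1) := by
  simp only [KnMinusE, SimpleGraph.sdiff_adj, SimpleGraph.top_adj, SimpleGraph.fromRel_adj]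
  tauto

lemma pathG_adj_succ {i : ℕ} (hi : i + 1 < n) :
    (pathG n).Adj ⟨i, by omega⟩ ⟨i + 1, hi⟩ := by
  simp [pathG]

lemma pathG_eq_top (hn : n ≤ 2) : pathG n = ⊤ := by
  ext i j
  simp only [pathG, SimpleGraph.fromRel_adj, SimpleGraph.top_adj, ne_eq, Fin.ext_iff]
  omega

lemma eq_KnMinusE_or_eq_top {G : SimpleGraph (Fin n)} (hG : KnMinusE n ≤ G) :
    G = KnMinusE n ∨ G = ⊤ := by
  rw [or_iff_not_imp_right, ← ne_eq, SimpleGraph.ne_top_iff_exists_not_adj]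
  rintro ⟨a, b, hab, hnadj⟩
  refine le_antisymm (fun i j hadj => ?_) hG
  have hnadj' := mt (@hG a b) hnadj
  simp only [KnMinusE_adj_iff] at hnadj' ⊢
  grind [hadj.symm, hadj.ne]

end Graphs

section HankelIdeal

variable {n : ℕ} {K : Type*} [Field K]

/-- The variable `x_k`, with `k : ℕ`; the index is reduced modulo `n + 1`. -/
noncomputable def hankelVar (n : ℕ) (K : Type*) [Field K] (k : ℕ) : MvPolynomial (Fin (n + 1)) K :=
  X (Fin.ofNat (n + 1) k)

lemma hankelVar_val (k : Fin (n + 1)) : hankelVar n K k = X k := by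
  rw [hankelVar, Fin.ofNat_val_eq_self]

lemma hg_eq_hankelVar (i j : Fin n) :
    hg n K i j = hankelVar n K i * hankelVar n K (j + 1) -
      hankelVar n K j * hankelVar n K (i + 1) := by
  rw [hg, ← hankelVar_val i.castSucc, ← hankelVar_val j.castSucc, ← hankelVar_val i.succ,
    ← hankelVar_val j.succ]
  rfl

lemma hankelRel_mk_iff (I : Ideal (MvPolynomial (Fin (n + 1)) K)) (i j : Fin n) :
    HankelRel (fun k => Ideal.Quotient.mk I (hankelVar n K k)) i j ↔ hg n K i j ∈ I := by
  rw [HankelRel, ← map_mul, ← map_mul, Ideal.Quotient.eq, hg_eq_hankelVar]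

lemma isHomogeneous_hg (i j : Fin n) : (hg n K i j).IsHomogeneous 2 :=
  ((isHomogeneous_X K _).mul (isHomogeneous_X K _)).sub
    ((isHomogeneous_X K _).mul (isHomogeneous_X K _))

lemma neg_hg (i j : Fin n) : -hg n K i j = hg n K j i :=
  neg_sub _ _

lemma hg_mem_hankelIdeal {G : SimpleGraph (Fin n)} {i j : Fin n} (hadj : G.Adj i j) :
    hg n K i j ∈ hankelIdeal n K G := by
  rcases lt_or_gt_of_ne hadj.ne with hij | hji
  · exact Ideal.subset_span ⟨i, j, hij, hadj, rfl⟩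
  · rw [← neg_hg, neg_mem_iff]
    exact Ideal.subset_span ⟨j, i, hji, hadj.symm, rfl⟩

lemma hg_mem_IX (i j : Fin n) : hg n K i j ∈ IX n K := by
  rcases eq_or_ne i j with rfl | hij
  · simp [hg]
  · exact hg_mem_hankelIdeal hij

lemma hankelIdeal_le_iff_forall_lt {G : SimpleGraph (Fin n)}
    {I : Ideal (MvPolynomial (Fin (n + 1)) K)} :
    hankelIdeal n K G ≤ I ↔ ∀ i j, i < j → G.Adj i j → hg n K i j ∈ I := by
  refine ⟨fun h i j _ hadj => h (hg_mem_hankelIdeal hadj), fun h => Ideal.span_le.mpr ?_⟩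
  rintro _ ⟨i, j, hij, hadj, rfl⟩
  exact h i j hij hadj

/-- The linear functional summing the coefficients of the monomials of index sum `c` that involve a
variable `x_k` with `k ≤ i`. For `c = i + j + 1` it is dual to the Hankel binomial `hg i j`. -/
noncomputable def lowCoeffSum (n : ℕ) (K : Type*) [Field K] (i c : ℕ) :
    MvPolynomial (Fin (n + 1)) K →ₗ[K] K :=
  open Classical in
  (basisMonomials (Fin (n + 1)) K).constr K fun m =>
    if Finsupp.weight (fun k : Fin (n + 1) => (k : ℕ)) m = c ∧ ∃ k, m k ≠ 0 ∧ (k : ℕ) ≤ i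
    then 1 else 0

lemma lowCoeffSum_X_mul_X (i c : ℕ) (p q : Fin (n + 1)) :
    lowCoeffSum n K i c (X p * X q) =
      if (p : ℕ) + q = c ∧ ((p : ℕ) ≤ i ∨ (q : ℕ) ≤ i) then 1 else 0 := by
  have hXX : (X p * X q : MvPolynomial (Fin (n + 1)) K) =
      basisMonomials _ K (Finsupp.single p 1 + Finsupp.single q 1) := by
    simp [X, monomial_mul]
  rw [hXX, lowCoeffSum, Module.Basis.constr_basis]
  refine if_congr (and_congr ?_ ?_) rfl rfl
  · simp [Finsupp.weight_single]
  · simp [Finsupp.single_apply, or_and_right, exists_or, imp_iff_not_or]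

lemma lowCoeffSum_hg {i j a b : Fin n} (hij : i < j) (hab : a < b) :
    lowCoeffSum n K i (i + j + 1) (hg n K a b) = if a = i ∧ b = j then 1 else 0 := by
  rw [hg, map_sub, lowCoeffSum_X_mul_X, lowCoeffSum_X_mul_X]
  simp only [Fin.val_castSucc, Fin.val_succ, Fin.ext_iff]
  rw [Fin.lt_def] at hij hab
  split_ifs <;> first | omega | simp

lemma hg_mem_hankelIdeal_iff {G : SimpleGraph (Fin n)} {i j : Fin n} (hij : i < j) :
    hg n K i j ∈ hankelIdeal n K G ↔ G.Adj i j := by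
  refine ⟨fun hmem => ?_, hg_mem_hankelIdeal⟩
  by_contra hnadj
  have hspan : hg n K i j ∈ Submodule.span K (hgenSet n K G) := by
    refine mem_span_of_mem_idealSpan_of_isHomogeneous ?_ (isHomogeneous_hg i j) hmem
    rintro _ ⟨a, b, -, -, rfl⟩
    exact isHomogeneous_hg a b
  have hker : Submodule.span K (hgenSet n K G) ≤ LinearMap.ker (lowCoeffSum n K i (i + j + 1)) := by
    rw [Submodule.span_le]
    rintro _ ⟨a, b, hab, hadj, rfl⟩
    rw [SetLike.mem_coe, LinearMap.mem_ker, lowCoeffSum_hg hij hab, if_neg]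
    rintro ⟨rfl, rfl⟩
    exact hnadj hadj
  have hvanish := LinearMap.mem_ker.mp (hker hspan)
  simp [lowCoeffSum_hg hij hij] at hvanish

lemma hankelIdeal_le_hankelIdeal_iff {G H : SimpleGraph (Fin n)} :
    hankelIdeal n K G ≤ hankelIdeal n K H ↔ G ≤ H := by
  refine ⟨fun h i j hadj => ?_, fun h => hankelIdeal_le_iff_forall_lt.mpr fun i j _ hadj =>
    hg_mem_hankelIdeal (h hadj)⟩
  rcases lt_or_gt_of_ne hadj.ne with hij | hji
  · exact (hg_mem_hankelIdeal_iff hij).mp (h (hg_mem_hankelIdeal hadj))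
  · exact ((hg_mem_hankelIdeal_iff hji).mp (h (hg_mem_hankelIdeal hadj.symm))).symm

lemma hankelIdeal_KnMinusE_le_radical_hankelIdeal_pathG :
    hankelIdeal n K (KnMinusE n) ≤ (hankelIdeal n K (pathG n)).radical := by
  rw [Ideal.radical_eq_sInf]
  refine le_sInf fun p ⟨hp, hprime⟩ => hankelIdeal_le_iff_forall_lt.mpr fun i j hij hadj => ?_
  rw [← hankelRel_mk_iff]
  refine HankelRel.of_succ (fun k hk => ?_) hij j.2 (KnMinusE_adj_iff.mp hadj).2.1
  exact (hankelRel_mk_iff p ⟨k, by omega⟩ ⟨k + 1, hk⟩).mpr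
    (hp (hg_mem_hankelIdeal (pathG_adj_succ hk)))

/-- The parametrization `x_k ↦ s t^k` of the affine cone over the rational normal curve. -/
noncomputable def rationalNormalMap (n : ℕ) (K : Type*) [Field K] :
    MvPolynomial (Fin (n + 1)) K →ₐ[K] MvPolynomial (Fin 2) K :=
  aeval fun k => X 0 * X 1 ^ (k : ℕ)

lemma IX_le_ker_rationalNormalMap : IX n K ≤ RingHom.ker (rationalNormalMap n K) := by
  refine hankelIdeal_le_iff_forall_lt.mpr fun i j _ _ => ?_
  simp only [RingHom.mem_ker, hg, rationalNormalMap, map_sub, map_mul, aeval_X, Fin.val_castSucc,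
    Fin.val_succ]
  ring

lemma rationalNormalMap_monomial (m : Fin (n + 1) →₀ ℕ) :
    rationalNormalMap n K (monomial m 1) =
      X 0 ^ m.toMultiset.card * X 1 ^ (m.toMultiset.map Fin.val).sum := by
  rw [rationalNormalMap, aeval_monomial_one_eq_prod_toMultiset, Multiset.prod_map_mul,
    Multiset.map_const', Multiset.prod_replicate, prod_map_pow_eq_pow_sum]

lemma mk_IX_monomial (m : Fin (n + 1) →₀ ℕ) :
    Ideal.Quotient.mk (IX n K) (monomial m 1) =
      hankelNormalForm n (fun k => Ideal.Quotient.mk (IX n K) (hankelVar n K k))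
        m.toMultiset.card (m.toMultiset.map Fin.val).sum := by
  set y : ℕ → MvPolynomial (Fin (n + 1)) K ⧸ IX n K :=
    fun k => Ideal.Quotient.mk (IX n K) (hankelVar n K k)
  have hy : ∀ i < n, ∀ j < n, HankelRel y i j := fun i hi j hj =>
    (hankelRel_mk_iff _ ⟨i, hi⟩ ⟨j, hj⟩).mpr (hg_mem_IX _ _)
  have hmk : (Ideal.Quotient.mkₐ K (IX n K)) = aeval fun k : Fin (n + 1) => y k := by
    ext k
    simp [y, hankelVar_val]
  rw [← Ideal.Quotient.mkₐ_eq_mk K, hmk, aeval_monomial_one_eq_prod_toMultiset,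
    ← Function.comp_def, ← Multiset.map_map, prod_map_eq_hankelNormalForm hy, Multiset.card_map]
  simp only [Multiset.mem_map, forall_exists_index, and_imp]
  rintro _ k - rfl
  exact Nat.lt_succ_iff.mp k.2

lemma IX_eq_ker_rationalNormalMap : IX n K = RingHom.ker (rationalNormalMap n K) := by
  refine le_antisymm IX_le_ker_rationalNormalMap fun f hf => ?_
  rw [← Ideal.Quotient.eq_zero_iff_mem]
  refine ker_le_ker_of_monomial (φ := (rationalNormalMap n K).toLinearMap)
    (ψ := (Ideal.Quotient.mkₐ K (IX n K)).toLinearMap)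
    (fun e => hankelNormalForm n (fun k => Ideal.Quotient.mk (IX n K) (hankelVar n K k))
      (e 0) (e 1))
    (fun m => ⟨Finsupp.single 0 m.toMultiset.card +
      Finsupp.single 1 (m.toMultiset.map Fin.val).sum, ?_, ?_⟩) hf
  · simp [rationalNormalMap_monomial, X_pow_eq_monomial, monomial_mul]
  · simp [mk_IX_monomial]

lemma isPrime_IX : (IX n K).IsPrime := by
  rw [IX_eq_ker_rationalNormalMap]
  exact RingHom.ker_isPrime _

lemma Pvars_eq_span_X_image (lo hi : ℕ) :
    Pvars n K lo hi = Ideal.span (X '' {i : Fin (n + 1) | lo ≤ (i : ℕ) ∧ (i : ℕ) ≤ hi}) := by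
  simp only [Pvars, Set.image, Set.mem_ofPred_eq, and_assoc, eq_comm]

lemma isPrime_Pvars (lo hi : ℕ) : (Pvars n K lo hi).IsPrime := by
  rw [Pvars_eq_span_X_image]
  exact isPrime_span_X_image _

lemma X_mem_Pvars_iff {lo hi : ℕ} {i : Fin (n + 1)} :
    X i ∈ Pvars n K lo hi ↔ lo ≤ (i : ℕ) ∧ (i : ℕ) ≤ hi := by
  rw [Pvars_eq_span_X_image, X_mem_span_X_image_iff, Set.mem_ofPred_eq]

lemma hankelIdeal_KnMinusE_le_Pvars :
    hankelIdeal n K (KnMinusE n) ≤ Pvars n K 1 (n - 1) := by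
  refine hankelIdeal_le_iff_forall_lt.mpr fun i j hij hadj => ?_
  rw [KnMinusE_adj_iff] at hadj
  rw [Fin.lt_def] at hij
  have hj : X j.castSucc ∈ Pvars n K 1 (n - 1) := X_mem_Pvars_iff.mpr (by simp; omega)
  refine sub_mem ?_ (Ideal.mul_mem_right _ _ hj)
  by_cases hi : (i : ℕ) = 0
  · exact Ideal.mul_mem_left _ _ (X_mem_Pvars_iff.mpr (by simp; omega))
  · exact Ideal.mul_mem_right _ _ (X_mem_Pvars_iff.mpr (by simp; omega))

section MissingEdge

variable {m : ℕ}

lemma IX_eq_sup_span_hg_zero_last :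
    IX (m + 1) K = hankelIdeal (m + 1) K (KnMinusE (m + 1)) ⊔
      Ideal.span {hg (m + 1) K 0 (Fin.last m)} := by
  apply le_antisymm
  · refine hankelIdeal_le_iff_forall_lt.mpr fun i j hij _ => ?_
    by_cases hcorner : i = 0 ∧ j = Fin.last m
    · obtain ⟨rfl, rfl⟩ := hcorner
      exact Ideal.mem_sup_right (Ideal.mem_span_singleton_self _)
    · refine Ideal.mem_sup_left (hg_mem_hankelIdeal (KnMinusE_adj_iff.mpr ⟨hij.ne, ?_⟩))
      rw [Fin.lt_def] at hij
      simp only [Fin.ext_iff, Fin.val_zero, Fin.val_last] at hcorner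
      omega
  · rw [sup_le_iff, Ideal.span_singleton_le_iff_mem]
    exact ⟨hankelIdeal_le_hankelIdeal_iff.mpr le_top, hg_mem_IX _ _⟩

lemma X_mul_hg_zero_last_mem (hm : 2 ≤ m) {c : Fin (m + 2)} (hc0 : 1 ≤ (c : ℕ))
    (hcm : (c : ℕ) ≤ m) :
    X c * hg (m + 1) K 0 (Fin.last m) ∈ hankelIdeal (m + 1) K (KnMinusE (m + 1)) := by
  set J := hankelIdeal (m + 1) K (KnMinusE (m + 1))
  have hJ : ∀ i j, i < j → j < m + 1 → ¬(i = 0 ∧ j = m + 1 - 1) →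
      HankelRel (fun k => Ideal.Quotient.mk J (hankelVar (m + 1) K k)) i j := by
    intro i j hij hj hcorner
    refine (hankelRel_mk_iff J ⟨i, hij.trans hj⟩ ⟨j, hj⟩).mpr (hg_mem_hankelIdeal ?_)
    simp only [KnMinusE_adj_iff, ne_eq, Fin.ext_iff]
    omega
  have hc := mul_corner_eq_of_hankelRel (by omega) hJ hc0 (Nat.lt_succ_of_le hcm)
  rw [← Ideal.Quotient.eq_zero_iff_mem, ← hankelVar_val, hg_eq_hankelVar, map_mul, map_sub, mul_sub,
    map_mul, map_mul, sub_eq_zero]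
  exact hc

lemma mul_hg_zero_last_mem (hm : 2 ≤ m) {p : MvPolynomial (Fin (m + 2)) K}
    (hp : p ∈ Pvars (m + 1) K 1 m) :
    p * hg (m + 1) K 0 (Fin.last m) ∈ hankelIdeal (m + 1) K (KnMinusE (m + 1)) := by
  induction hp using Submodule.span_induction with
  | mem f hf =>
    obtain ⟨c, hc0, hcm, rfl⟩ := hf
    exact X_mul_hg_zero_last_mem hm hc0 hcm
  | zero => simp
  | add p q _ _ hp hq => simpa only [add_mul] using add_mem hp hq
  | smul a p _ hp => simpa only [smul_eq_mul, mul_assoc] using Ideal.mul_mem_left _ a hp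

lemma hg_zero_last_notMem_Pvars (hm : 1 ≤ m) :
    hg (m + 1) K 0 (Fin.last m) ∉ Pvars (m + 1) K 1 m := by
  intro h
  have hlast : X (Fin.last m).castSucc ∈ Pvars (m + 1) K 1 m := X_mem_Pvars_iff.mpr (by simpa)
  have hprod := add_mem h (Ideal.mul_mem_right (X (0 : Fin (m + 1)).succ) _ hlast)
  rw [hg, sub_add_cancel] at hprod
  rcases (isPrime_Pvars 1 m).mem_or_mem hprod with h0 | hend
  · simp [X_mem_Pvars_iff] at h0
  · simp [X_mem_Pvars_iff] at hend

end MissingEdge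

theorem hankelIdeal_KnMinusE_eq_IX_inf_Pvars (hn : 3 ≤ n) :
    hankelIdeal n K (KnMinusE n) = IX n K ⊓ Pvars n K 1 (n - 1) := by
  obtain ⟨m, rfl⟩ : ∃ m, n = m + 1 := ⟨n - 1, by omega⟩
  have : (Pvars (m + 1) K 1 (m + 1 - 1)).IsPrime := isPrime_Pvars _ _
  rw [IX_eq_sup_span_hg_zero_last]
  exact (sup_span_singleton_inf_eq_left hankelIdeal_KnMinusE_le_Pvars
    (hg_zero_last_notMem_Pvars (by omega)) fun p hp => mul_hg_zero_last_mem (by omega) hp).symm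

lemma isRadical_hankelIdeal_KnMinusE (hn : 3 ≤ n) : (hankelIdeal n K (KnMinusE n)).IsRadical := by
  rw [hankelIdeal_KnMinusE_eq_IX_inf_Pvars hn]
  exact isPrime_IX.isRadical.inf (isPrime_Pvars _ _).isRadical

end HankelIdeal

theorem stmt_6_general (n : ℕ) (K : Type*) [Field K] (G : SimpleGraph (Fin n))
    (hpath : pathG n ≤ G) : (hankelIdeal n K G).IsRadical ↔ KnMinusE n ≤ G := by
  constructor
  · intro hrad
    rw [← hankelIdeal_le_hankelIdeal_iff (K := K)]
    calc hankelIdeal n K (KnMinusE n)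
        ≤ (hankelIdeal n K (pathG n)).radical := hankelIdeal_KnMinusE_le_radical_hankelIdeal_pathG
      _ ≤ (hankelIdeal n K G).radical :=
          Ideal.radical_mono (hankelIdeal_le_hankelIdeal_iff.mpr hpath)
      _ = hankelIdeal n K G := hrad.radical
  · intro hG
    rcases eq_KnMinusE_or_eq_top hG with rfl | rfl
    · rcases le_or_gt n 2 with hn | hn
      · rw [top_le_iff.mp ((pathG_eq_top hn).ge.trans hpath)]
        exact isPrime_IX.isRadical
      · exact isRadical_hankelIdeal_KnMinusE hn
    · exact isPrime_IX.isRadical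

/-- For a connected labeled semi-Hamiltonian graph `G` on `[n]`, the ideal
`I_G` is radical iff `G = K_n − e` with `e = {1, n}`. -/
theorem stmt_6 (n : ℕ) (K : Type*) [Field K] (hn : 2 ≤ n)
    (G : SimpleGraph (Fin n)) (hG : G.Connected) (hpath : pathG n ≤ G)
    (hne : ¬ G.Adj ⟨0, by omega⟩ ⟨n - 1, by omega⟩) :
    (hankelIdeal n K G).IsRadical ↔ G = KnMinusE n := by
  rw [stmt_6_general n K G hpath]
  refine ⟨fun h => (eq_KnMinusE_or_eq_top h).resolve_right ?_, ge_of_eq⟩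
  rintro rfl
  exact hne (by simp; omega)
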